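/- Let d ≥ 2 be an integer, let μ be the normalized Haar probability measure on U(d), and let Γ(X) = Σ_{i=1}^r K_i X K_iᴴ be a Kraus channel on d×d matrices (so Σ_i K_iᴴ K_i = I). Set q = (Σ_{i=1}^r |tr(K_i)|² − 1)/(d² − 1). Let P be an orthogonal projection on ℂ^d of rank s, and let ρ be a density matrix supported inside the range of P (i.e. P ρ P = ρ). Then the Haar-averaged acceptance probability satisfies ∫_{U(d)} tr( P · Uᴴ Γ(U ρ Uᴴ) U ) dμ(U) = q + (1 − q)·s/d. (Exact Haar-average of the tag-verification acceptance probability P₀ in the PQAS authentication theorem.) -/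

import Mathlib

open MeasureTheory Matrix
open scoped ComplexOrder

attribute [local instance] Matrix.normedAddCommGroup Matrix.normedSpace

noncomputable instance {n : Type*} [Fintype n] [DecidableEq n] :
    MeasurableSpace (Matrix.unitaryGroup n ℂ) := borel _

instance {n : Type*} [Fintype n] [DecidableEq n] :
    BorelSpace (Matrix.unitaryGroup n ℂ) := ⟨rfl⟩

theorem compact_U (d : ℕ) : CompactSpace (Matrix.unitaryGroup (Fin d) ℂ) := by
  refine (isCompact_iff_compactSpace (s := ((Matrix.unitaryGroup (Fin d) ℂ : Submonoid _) : Set (Matrix (Fin d) (Fin d) ℂ)))).mp ?_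
  apply Metric.isCompact_of_isClosed_isBounded
  · have : ((Matrix.unitaryGroup (Fin d) ℂ : Submonoid _) : Set (Matrix (Fin d) (Fin d) ℂ))
        = {A | A * Aᴴ = 1} := by
      ext A
      simp [Matrix.mem_unitaryGroup_iff, Matrix.star_eq_conjTranspose]
    rw [this]
    exact isClosed_eq (by fun_prop) continuous_const
  · rw [isBounded_iff_forall_norm_le]
    exact ⟨1, fun A hA => entrywise_sup_norm_bound_of_unitary hA⟩

theorem right_inv_U (d : ℕ) (μ : Measure (Matrix.unitaryGroup (Fin d) ℂ))
    [μ.IsHaarMeasure] [IsProbabilityMeasure μ] : μ.IsMulRightInvariant := by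
  have := compact_U d
  refine ⟨fun g => ?_⟩
  have : IsProbabilityMeasure (μ.map (· * g)) :=
    Measure.isProbabilityMeasure_map (measurable_mul_const g).aemeasurable
  exact Measure.isHaarMeasure_eq_of_isProbabilityMeasure _ _

/-- Structure theorem for invariant forms. -/
theorem lie_rel {d : ℕ} (B : Matrix (Fin d) (Fin d) ℂ →ₗ[ℂ] Matrix (Fin d) (Fin d) ℂ →ₗ[ℂ] ℂ)
    (hB : ∀ V : Matrix (Fin d) (Fin d) ℂ, V ∈ Matrix.unitaryGroup (Fin d) ℂ →
      ∀ X Y, B (V * X) (V * Y) = B (X * V) (Y * V))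
    (p : Matrix (Fin d) (Fin d) ℂ) (hp : p * p = p) (hp' : pᴴ = p) (X Y) :
    B (p * X) Y + B X (p * Y) = B (X * p) Y + B X (Y * p) := by
  have key : ∀ z : ℂ, z * star z = 1 → 
      (z - 1) * (B (p * X) Y + B X (p * Y) - (B (X * p) Y + B X (Y * p))) +
      (z - 1) ^ 2 * (B (p * X) (p * Y) - B (X * p) (Y * p)) = 0 := by
    intro z hz
    have hV : (1 + (z - 1) • p) ∈ Matrix.unitaryGroup (Fin d) ℂ := by
      rw [Matrix.mem_unitaryGroup_iff, Matrix.star_eq_conjTranspose]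
      simp only [conjTranspose_add, conjTranspose_one, conjTranspose_smul, hp', mul_add, add_mul,
        one_mul, mul_one, smul_mul_assoc, mul_smul_comm, hp, smul_smul, smul_add]
      rw [add_assoc, ← add_smul, ← add_smul]
      have : star (z - 1) + ((z - 1) + star (z - 1) * (z - 1)) = 0 := by
        rw [star_sub, star_one]; linear_combination hz
      convert add_zero (1 : Matrix (Fin d) (Fin d) ℂ) using 2
      convert zero_smul ℂ p using 2
      linear_combination this
    have := hB _ hV X Y
    simp only [add_mul, mul_add, one_mul, mul_one, smul_mul_assoc, mul_smul_comm, map_add, map_smul,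
      LinearMap.add_apply, LinearMap.smul_apply, smul_eq_mul] at this
    linear_combination this
  have h1 := key (-1) (by simp)
  have h2 := key Complex.I (by simp)
  have hI := Complex.I_mul_I
  set D1 := (B (p * X) Y + B X (p * Y) - (B (X * p) Y + B X (Y * p)))
  set D2 := (B (p * X) (p * Y) - B (X * p) (Y * p))
  have h3 : D1 = 2 * D2 := by linear_combination (-1/2) * h1
  have h4 : (Complex.I - 1) * (Complex.I + 1) * D2 = 0 := by rw [h3] at h2; linear_combination h2
  have h5 : D2 = 0 := by
    have : -2 * D2 = 0 := by linear_combination h4 - hI * D2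
    simpa using this
  have : D1 = 0 := by rw [h3, h5]; simp
  exact sub_eq_zero.mp this

theorem lie_rel_single {d : ℕ} (B : Matrix (Fin d) (Fin d) ℂ →ₗ[ℂ] Matrix (Fin d) (Fin d) ℂ →ₗ[ℂ] ℂ)
    (hB : ∀ V : Matrix (Fin d) (Fin d) ℂ, V ∈ Matrix.unitaryGroup (Fin d) ℂ →
      ∀ X Y, B (V * X) (V * Y) = B (X * V) (Y * V))
    (k l : Fin d) (X Y) :
    B (single k l 1 * X) Y + B X (single k l 1 * Y)
      = B (X * single k l 1) Y + B X (Y * single k l 1) := by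
  by_cases hkl : k = l
  · subst hkl
    exact lie_rel B hB _ (by simp) (by simp [conjTranspose_single]) X Y
  have hkl' : l ≠ k := fun h => hkl h.symm
  have h0 := lie_rel B hB (single k k 1) (by simp) (by simp [conjTranspose_single]) X Y
  have h0' := lie_rel B hB (single l l 1) (by simp) (by simp [conjTranspose_single]) X Y
  have key : ∀ w : ℂ, w * star w = 1 → _ := fun w hw => 
    lie_rel B hB ((1/2 : ℂ) • (single k k 1 + single l l 1 + w • single k l 1 + star w • single l k 1))
    (by
      simp only [smul_mul_assoc, mul_smul_comm, add_mul, mul_add, single_mul_single_same,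
        single_mul_single_of_ne _ _ _ _ hkl, single_mul_single_of_ne _ _ _ _ hkl', smul_zero, mul_one,
        smul_add, smul_smul, zero_add, add_zero, hw]
      have hw' : star w * w = 1 := by rw [mul_comm, hw]
      ext i j
      simp only [Matrix.add_apply, Matrix.smul_apply, smul_eq_mul]
      linear_combination (1/4) * single k k (1:ℂ) i j * hw + (1/4) * single l l (1:ℂ) i j * hw)
    (by
      simp only [conjTranspose_smul, conjTranspose_add, conjTranspose_single, star_one, star_star]
      have : star (1/2 : ℂ) = 1/2 := by simp
      rw [this]
      congr 1
      abel) X Y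
  have h1 := key 1 (by simp)
  have h2 := key Complex.I (by simp)
  have hs : star Complex.I = -Complex.I := by simp
  have hI := Complex.I_mul_I
  rw [hs] at h2
  simp only [star_one, add_mul, mul_add, one_mul, mul_one, smul_mul_assoc, mul_smul_comm, map_add, map_smul,
      LinearMap.add_apply, LinearMap.smul_apply, smul_eq_mul] at h1 h2
  generalize B (single k l 1 * X) Y = a1 at *
  generalize B X (single k l 1 * Y) = a2 at *
  generalize B (X * single k l 1) Y = a3 at *
  generalize B X (Y * single k l 1) = a4 at *
  generalize B (single l k 1 * X) Y = b1 at *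
  generalize B X (single l k 1 * Y) = b2 at *
  generalize B (X * single l k 1) Y = b3 at *
  generalize B X (Y * single l k 1) = b4 at *
  have e1 : (a1 + a2 - a3 - a4) + (b1 + b2 - b3 - b4) = 0 := by
    linear_combination 2 * h1 - h0 - h0'
  have e2 : Complex.I * ((a1 + a2 - a3 - a4) - (b1 + b2 - b3 - b4)) = 0 := by
    linear_combination 2 * h2 - h0 - h0'
  have e3 := (mul_eq_zero.mp e2).resolve_left Complex.I_ne_zero
  linear_combination (e1 + e3) / 2

theorem structure_thm {d : ℕ} (hd : 2 ≤ d) (B : Matrix (Fin d) (Fin d) ℂ →ₗ[ℂ] Matrix (Fin d) (Fin d) ℂ →ₗ[ℂ] ℂ)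
    (hB : ∀ V : Matrix (Fin d) (Fin d) ℂ, V ∈ Matrix.unitaryGroup (Fin d) ℂ →
      ∀ X Y, B (V * X) (V * Y) = B (X * V) (Y * V)) :
    ∃ a b : ℂ, ∀ X Y, B X Y = a * (X.trace * Y.trace) + b * (X * Y).trace := by
  let β : Fin d → Fin d → Fin d → Fin d → ℂ := fun i j m n => B (single i j 1) (single m n 1)
  have R : ∀ k l i j m n, (if l = i then β k j m n else 0) + (if l = m then β i j k n else 0)
      = (if j = k then β i l m n else 0) + (if n = k then β i j m l else 0) := by
    intro k l i j m n
    have := lie_rel_single B hB k l (single i j 1) (single m n 1)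
    have sm : ∀ a b c e : Fin d, single a b (1:ℂ) * single c e 1
        = if b = c then single a e 1 else 0 := by
      intro a b c e
      split_ifs with h
      · subst h; simp
      · exact single_mul_single_of_ne _ _ _ _ h _
    simp only [sm] at this
    have e1 : ∀ (c : Prop) [Decidable c] (M N : Matrix (Fin d) (Fin d) ℂ),
      B (if c then M else 0) N = if c then B M N else 0 := by
      intro c _ M N; split_ifs <;> simp
    have e2 : ∀ (c : Prop) [Decidable c] (M N : Matrix (Fin d) (Fin d) ℂ),
      B N (if c then M else 0) = if c then B N M else 0 := by
      intro c _ M N; split_ifs <;> simp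
    simpa only [e1, e2] using this
  have hw : ∀ i j m n, ¬ (i = j ∧ m = n) → ¬ (i = n ∧ j = m) → β i j m n = 0 := by
    intro i j m n h1 h2
    have r1 := R i i i j m n
    have r2 := R j j i j m n
    have r3 := R m m i j m n
    have r4 := R n n i j m n
    clear R
    grind
  have c1 : ∀ k l, k ≠ l → β k k k k = β l l k k + β l k k l := by
    intro k l h
    have := R k l l k k k
    grind
  have c2 : ∀ k l, k ≠ l → β l l l l = β k k l l + β l k k l := by
    intro k l h
    have := R k l l k l l
    grind
  have c3 : ∀ k l, k ≠ l → β k k k k = β k k l l + β k l l k := by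
    intro k l h
    have := R k l k k l k
    grind
  have c4 : ∀ k l m, m ≠ k → m ≠ l → β k k m m = β l l m m := by
    intro k l m h h'
    have := R k l l k m m
    grind
  have c5 : ∀ k l m, m ≠ k → m ≠ l → β m m k k = β m m l l := by
    intro k l m h h'
    have := R k l m m l k
    grind
  have cc : ∀ k l, k ≠ l → β k k k k = β l l l l ∧ β k k l l = β l l k k ∧ β k l l k = β l k k l := by
    intro k l h
    have := c1 k l h
    have := c1 l k h.symm
    have := c2 k l h
    have := c2 l k h.symm
    have := c3 k l h
    have := c3 l k h.symm
    clear R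
    grind
  let k0 : Fin d := ⟨0, by omega⟩
  let l0 : Fin d := ⟨1, by omega⟩
  have h0 : k0 ≠ l0 := by simp [k0, l0]
  have hc : ∀ k, β k k k k = β k0 k0 k0 k0 := by
    intro k
    by_cases h : k = k0
    · rw [h]
    · exact (cc k k0 h).1
  have ha : ∀ k l, k ≠ l → β k k l l = β k0 k0 l0 l0 := by
    intro k l h
    by_cases hl : l = k0
    · subst hl
      rw [(cc _ _ h).2.1]
      exact c5 _ _ _ h.symm h0
    · rw [c4 k k0 l h.symm hl]
      exact c5 _ _ _ (Ne.symm hl) h0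
  have hb : ∀ k l, k ≠ l → β k l l k = β k0 k0 k0 k0 - β k0 k0 l0 l0 := by
    intro k l h
    rw [← hc k, ← ha k l h, c3 k l h]; ring
  refine ⟨β k0 k0 l0 l0, β k0 k0 k0 k0 - β k0 k0 l0 l0, ?_⟩
  have hβ : ∀ i j m n, β i j m n = β k0 k0 l0 l0 * ((if i = j then 1 else 0) * (if m = n then 1 else 0))
     + (β k0 k0 k0 k0 - β k0 k0 l0 l0) * (if i = n ∧ j = m then 1 else 0) := by
    intro i j m n
    by_cases h1 : i = j ∧ m = n
    · obtain ⟨rfl, rfl⟩ := h1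
      by_cases h : i = m
      · subst h; simp [hc]
      · simp [h, ha i m h]
    · by_cases h2 : i = n ∧ j = m
      · obtain ⟨rfl, rfl⟩ := h2
        have h : i ≠ j := fun h => h1 ⟨h, h.symm⟩
        simp [h, hb i j h]
      · rw [hw i j m n h1 h2]
        simp [h2]
        grind
  generalize β k0 k0 k0 k0 - β k0 k0 l0 l0 = b at hβ
  generalize β k0 k0 l0 l0 = a at hβ
  let C : Matrix (Fin d) (Fin d) ℂ →ₗ[ℂ] Matrix (Fin d) (Fin d) ℂ →ₗ[ℂ] ℂ :=
    LinearMap.mk₂ ℂ (fun X Y => a * (X.trace * Y.trace) + b * (X * Y).trace)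
      (by intros; simp only [add_mul, trace_add]; ring)
      (by intros; simp only [smul_mul_assoc, trace_smul, smul_eq_mul]; ring)
      (by intros; simp only [mul_add, trace_add]; ring)
      (by intros; simp only [mul_smul_comm, trace_smul, smul_eq_mul]; ring)
  have hBC : B = C := by
    apply Matrix.ext_linearMap
    intro i j
    apply LinearMap.ext_ring
    apply Matrix.ext_linearMap
    intro m n
    apply LinearMap.ext_ring
    change β i j m n = a * ((single i j (1:ℂ)).trace * (single m n (1:ℂ)).trace) + b * (single i j (1:ℂ) * single m n (1:ℂ)).trace
    rw [hβ]
    have t : ∀ a b : Fin d, (single a b (1:ℂ)).trace = if a = b then 1 else 0 := by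
      intro a b
      split_ifs with h
      · subst h; simp
      · exact trace_single_eq_of_ne _ _ _ h
    rw [t, t]
    by_cases h : j = m
    · subst h
      simp [t]
    · rw [single_mul_single_of_ne _ _ _ _ h]
      simp [h]
  intro X Y
  rw [hBC]
  rfl

theorem avg_aux (d : ℕ) (hd : 2 ≤ d)
    (μ : Measure (Matrix.unitaryGroup (Fin d) ℂ))
    [μ.IsHaarMeasure] [IsProbabilityMeasure μ]
    (r : ℕ) (K : Fin r → Matrix (Fin d) (Fin d) ℂ)
    (hK : ∑ i, (K i)ᴴ * K i = 1) :
    ∃ a b : ℂ, a * d + b = 1 ∧ a * d + b * d ^ 2 = ((∑ i, ‖(K i).trace‖ ^ 2 : ℝ) : ℂ) ∧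
    ∀ X Y : Matrix (Fin d) (Fin d) ℂ, (∫ U, (X * ((U : Matrix (Fin d) (Fin d) ℂ)ᴴ *
        (∑ i, K i * ((U : Matrix (Fin d) (Fin d) ℂ) * Y *
          (U : Matrix (Fin d) (Fin d) ℂ)ᴴ) * (K i)ᴴ) *
        (U : Matrix (Fin d) (Fin d) ℂ))).trace ∂μ) = a * (X.trace * Y.trace) + b * (X * Y).trace := by
  have := compact_U d
  have := right_inv_U d μ
  let F : Matrix (Fin d) (Fin d) ℂ → Matrix (Fin d) (Fin d) ℂ → Matrix.unitaryGroup (Fin d) ℂ → ℂ :=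
    fun X Y U => (X * ((U : Matrix (Fin d) (Fin d) ℂ)ᴴ *
        (∑ i, K i * ((U : Matrix (Fin d) (Fin d) ℂ) * Y *
          (U : Matrix (Fin d) (Fin d) ℂ)ᴴ) * (K i)ᴴ) *
        (U : Matrix (Fin d) (Fin d) ℂ))).trace
  have hFc : ∀ X Y, Continuous (F X Y) := by
    intro X Y
    have hc : Continuous (fun U : Matrix.unitaryGroup (Fin d) ℂ => (U : Matrix (Fin d) (Fin d) ℂ)) :=
      continuous_subtype_val
    simp only [F]
    fun_prop
  have hFi : ∀ X Y, Integrable (F X Y) μ := fun X Y =>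
    (hFc X Y).integrable_of_hasCompactSupport (HasCompactSupport.of_compactSpace _)
  let B : Matrix (Fin d) (Fin d) ℂ →ₗ[ℂ] Matrix (Fin d) (Fin d) ℂ →ₗ[ℂ] ℂ :=
    LinearMap.mk₂ ℂ (fun X Y => ∫ U, F X Y U ∂μ)
      (by
        intro X X' Y
        rw [← integral_add (hFi _ _) (hFi _ _)]
        simp only [F, add_mul, trace_add])
      (by
        intro c X Y
        rw [smul_eq_mul, ← integral_const_mul]
        simp only [F, smul_mul_assoc, trace_smul, smul_eq_mul])
      (by
        intro X Y Y'
        rw [← integral_add (hFi _ _) (hFi _ _)]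
        simp only [F, add_mul, mul_add, trace_add, Finset.sum_add_distrib])
      (by
        intro c X Y
        rw [smul_eq_mul, ← integral_const_mul]
        simp only [F, smul_mul_assoc, mul_smul_comm, trace_smul, smul_eq_mul, ← Finset.smul_sum])
  have hBF : ∀ X Y, B X Y = ∫ U, F X Y U ∂μ := fun X Y => rfl
  have hinv : ∀ V : Matrix (Fin d) (Fin d) ℂ, V ∈ Matrix.unitaryGroup (Fin d) ℂ →
      ∀ X Y, B (V * X) (V * Y) = B (X * V) (Y * V) := by
    intro V hV X Y
    rw [hBF, hBF, ← integral_mul_right_eq_self (F (X * V) (Y * V)) (⟨V, hV⟩ : Matrix.unitaryGroup (Fin d) ℂ)]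
    congr 1
    ext U
    have h1 : V * Vᴴ = 1 := by
      rw [← Matrix.star_eq_conjTranspose]; exact Matrix.mem_unitaryGroup_iff.mp hV
    have h2 : ((U * (⟨V, hV⟩ : Matrix.unitaryGroup (Fin d) ℂ) : Matrix.unitaryGroup (Fin d) ℂ) : Matrix (Fin d) (Fin d) ℂ) = U * V := rfl
    simp only [F, h2, conjTranspose_mul, conjTranspose_conjTranspose]
    have h3 : ∀ Z : Matrix (Fin d) (Fin d) ℂ, V * (Vᴴ * Z) = Z := fun Z => by
      rw [← mul_assoc, h1, one_mul]
    have h4 : ∀ Z : Matrix (Fin d) (Fin d) ℂ, (V * Z).trace = (Z * V).trace := fun Z =>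
      trace_mul_comm _ _
    simp only [mul_assoc, h3]
    rw [h4]
    simp only [mul_assoc]
  obtain ⟨a, b, hab⟩ := structure_thm hd B hinv
  have hU1 : ∀ U : Matrix.unitaryGroup (Fin d) ℂ, (U : Matrix (Fin d) (Fin d) ℂ) * (U : Matrix (Fin d) (Fin d) ℂ)ᴴ = 1 :=
    fun U => Matrix.mem_unitaryGroup_iff.mp U.2
  have hU2 : ∀ U : Matrix.unitaryGroup (Fin d) ℂ, (U : Matrix (Fin d) (Fin d) ℂ)ᴴ * (U : Matrix (Fin d) (Fin d) ℂ) = 1 :=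
    fun U => Matrix.mem_unitaryGroup_iff'.mp U.2
  have hd0 : (d : ℂ) ≠ 0 := by exact_mod_cast (by omega : d ≠ 0)
  refine ⟨a, b, ?_, ?_, fun X Y => (hab X Y)⟩
  · have h1 := hab 1 1
    have : B 1 1 = d := by
      rw [hBF]
      have : ∀ U, F 1 1 U = d := by
        intro U
        simp only [F, one_mul, mul_one, hU1]
        rw [trace_mul_cycle, hU1, one_mul, trace_sum]
        simp only [fun i => trace_mul_comm (K i) (K i)ᴴ]
        rw [← trace_sum, hK]
        simp
      simp [this]
    rw [this] at h1
    simp only [trace_one, mul_one, Fintype.card_fin] at h1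
    apply mul_left_cancel₀ hd0
    linear_combination -h1
  · have h1 : ∑ i : Fin d, ∑ j : Fin d, B (single i j 1) (single j i 1) = ((∑ i, ‖(K i).trace‖ ^ 2 : ℝ) : ℂ) := by
      simp only [hBF]
      simp_rw [← integral_finsetSum _ (fun j _ => hFi _ _)]
      rw [← integral_finsetSum _ (fun i _ => integrable_finsetSum _ (fun j _ => hFi _ _))]
      have : ∀ U, ∑ i : Fin d, ∑ j : Fin d, F (single i j 1) (single j i 1) U = ((∑ i, ‖(K i).trace‖ ^ 2 : ℝ) : ℂ) := by
        intro U
        have e : ∀ X Y, F X Y U = ∑ k, (X * ((U : Matrix (Fin d) (Fin d) ℂ)ᴴ * K k * (U : Matrix (Fin d) (Fin d) ℂ)) * Y * ((U : Matrix (Fin d) (Fin d) ℂ)ᴴ * K k * (U : Matrix (Fin d) (Fin d) ℂ))ᴴ).trace := by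
          intro X Y
          simp only [F, Finset.mul_sum, Finset.sum_mul, trace_sum, conjTranspose_mul, conjTranspose_conjTranspose, mul_assoc]
        simp only [e]
        have tA : ∀ A : Matrix (Fin d) (Fin d) ℂ, ∑ i : Fin d, ∑ j : Fin d, (single i j 1 * A * single j i 1 * Aᴴ).trace = ((‖A.trace‖ ^ 2 : ℝ) : ℂ) := by
          intro A
          have : ∀ i j, (single i j 1 * A * single j i 1 * Aᴴ).trace = A j j * star (A i i) := by
            intro i j
            rw [single_mul_mul_single]
            simp [trace_single_mul]
          simp only [this]
          have h : ((‖A.trace‖ ^ 2 : ℝ) : ℂ) = A.trace * star A.trace := by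
            rw [Complex.star_def, Complex.mul_conj, Complex.normSq_eq_norm_sq]
          rw [h]
          simp only [trace, diag, star_sum, Finset.sum_mul_sum]
          rw [Finset.sum_comm]
        have tK : ∀ k, ((U : Matrix (Fin d) (Fin d) ℂ)ᴴ * K k * (U : Matrix (Fin d) (Fin d) ℂ)).trace = (K k).trace := by
          intro k
          rw [trace_mul_cycle, hU1, one_mul]
        have sw : ∀ g : Fin d → Fin d → Fin r → ℂ,
            ∑ i, ∑ j, ∑ k, g i j k = ∑ k, ∑ i, ∑ j, g i j k := by
          intro g
          rw [Finset.sum_comm]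
          rw [Finset.sum_comm' (t' := Finset.univ) (s' := fun _ => Finset.univ) (by simp)]
          rw [Finset.sum_comm (s := (Finset.univ : Finset (Fin r)))]
          exact Finset.sum_congr rfl fun i _ => Finset.sum_comm
        rw [sw]
        simp only [tA, tK]
        push_cast
        rfl
      simp [this]
    rw [← h1]
    simp only [hab]
    have t1 : ∀ i j : Fin d, (single i j (1:ℂ)).trace * (single j i (1:ℂ)).trace = if i = j then 1 else 0 := by
      intro i j
      split_ifs with h
      · subst h; simp
      · simp [trace_single_eq_of_ne _ _ _ h]
    simp only [t1, single_mul_single_same, trace_single_eq_same, Finset.sum_add_distrib, mul_one]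
    simp
    ring

/-- **Haar-average of the tag-verification acceptance probability (PQAS authentication).**
For a Kraus channel `Γ` with `q = (Σᵢ |tr Kᵢ|² − 1)/(d² − 1)`, an orthogonal projection `P`
of rank `s`, and a density matrix `ρ` supported inside the range of `P`:
`∫ tr(P · Uᴴ Γ(U ρ Uᴴ) U) dμ(U) = q + (1 − q)·s/d`. -/
theorem haar_average_acceptance (d : ℕ) (hd : 2 ≤ d)
    (μ : Measure (Matrix.unitaryGroup (Fin d) ℂ))
    [μ.IsHaarMeasure] [IsProbabilityMeasure μ]
    (r : ℕ) (K : Fin r → Matrix (Fin d) (Fin d) ℂ)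
    (hK : ∑ i, (K i)ᴴ * K i = 1)
    (q : ℝ) (hq : q = ((∑ i, ‖(K i).trace‖ ^ 2) - 1) / ((d : ℝ) ^ 2 - 1))
    (P : Matrix (Fin d) (Fin d) ℂ) (hP1 : P * P = P) (hP2 : Pᴴ = P)
    (s : ℕ) (hs : P.trace = (s : ℂ))
    (ρ : Matrix (Fin d) (Fin d) ℂ) (hρ : ρ.PosSemidef) (hρtr : ρ.trace = 1)
    (hsupp : P * ρ * P = ρ) :
    (∫ U, (P * ((U : Matrix (Fin d) (Fin d) ℂ)ᴴ *
        (∑ i, K i * ((U : Matrix (Fin d) (Fin d) ℂ) * ρ *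
          (U : Matrix (Fin d) (Fin d) ℂ)ᴴ) * (K i)ᴴ) *
        (U : Matrix (Fin d) (Fin d) ℂ))).trace ∂μ)
      = ((q + (1 - q) * (s : ℝ) / (d : ℝ) : ℝ) : ℂ) := by
  obtain ⟨a, b, h1, h2, h3⟩ := avg_aux d hd μ r K hK
  rw [h3, hs, hρtr]
  have hPρ : P * ρ = ρ := by
    rw [← hsupp, ← mul_assoc, ← mul_assoc, hP1]
  rw [hPρ, hρtr]
  have hd0 : (d : ℂ) ≠ 0 := by exact_mod_cast (by omega : d ≠ 0)
  have hd1 : (d : ℂ) ^ 2 - 1 ≠ 0 := by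
    have : (d : ℝ) ^ 2 - 1 ≠ 0 := by
      have : (2 : ℝ) ≤ d := by exact_mod_cast hd
      nlinarith
    exact_mod_cast this
  have hb : b = (q : ℂ) := by
    have : (q : ℂ) = (((∑ i, ‖(K i).trace‖ ^ 2 : ℝ) : ℂ) - 1) / ((d : ℂ) ^ 2 - 1) := by
      rw [hq]; push_cast; rfl
    rw [this, ← h2, eq_div_iff hd1]
    linear_combination -h1
  have ha : a = (1 - (q : ℂ)) / d := by
    rw [eq_div_iff hd0, ← hb]
    linear_combination h1
  rw [ha, hb]
  push_cast
  ring
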